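/- Let R be a commutative ring, p ≥ 2, and let w_1, …, w_{p−2}, x, y, a, b be vectors in R^p. For vectors u, v ∈ R^p, let D(u,v) denote the determinant of the p×p matrix whose rows are w_1, …, w_{p−2}, u, v in this order. Then the following Plücker relation holds: D(x,a)·D(y,b) − D(y,a)·D(x,b) = D(x,y)·D(a,b). -/

import Mathlib

/-- `plueckerD w u v` is the determinant of the `p × p` matrix whose rows are
`w 0, …, w (p-3), u, v` in this order (rows `0, …, p-3` come from the family `w`,
row `p-2` is `u`, and row `p-1` is `v`). -/
noncomputable def plueckerD {R : Type*} [CommRing R] {p : ℕ} (w : ℕ → Fin p → R)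
    (u v : Fin p → R) : R :=
  (Matrix.of (fun k : Fin p =>
    if (k : ℕ) < p - 2 then w (k : ℕ) else if (k : ℕ) = p - 2 then u else v)).det

/-!
Cramer's rule writes `det M • b` as the sum of the rows `M k`, weighted by the determinants of `M`
with row `k` replaced by `b`. Applying the linear form `v ↦ D(a, v)` to this identity, where `M` has
the rows `x` and `y` in the two distinguished positions, kills every term coming from a common row,
and the two surviving terms give the Plücker relation.
-/

section DetUpdateRows

variable {n R : Type*} [Fintype n] [DecidableEq n] [CommRing R]

theorem sum_det_updateRow_smul_row (M : Matrix n n R) (b : n → R) :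
    ∑ k, (M.updateRow k b).det • M k = M.det • b := by
  calc ∑ k, (M.updateRow k b).det • M k
      = Matrix.vecMul (Matrix.cramer M.transpose b) M := by
        simp only [Matrix.vecMul_eq_sum, Matrix.cramer_transpose_apply]
    _ = M.det • b := by
        rw [← Matrix.mulVec_transpose, Matrix.mulVec_cramer, Matrix.det_transpose]

theorem det_mul_det_eq_sum_det_updateRow_mul (M N : Matrix n n R) (j : n) :
    M.det * N.det = ∑ k, (M.updateRow k (N j)).det * (N.updateRow j (M k)).det := by
  let f : (n → R) →ₗ[R] R := Matrix.detRowAlternating.toMultilinearMap.toLinearMap N j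
  have hf (v : n → R) : f v = (N.updateRow j v).det := rfl
  have cramer := congrArg f (sum_det_updateRow_smul_row M (N j))
  simp only [map_sum, map_smul, smul_eq_mul] at cramer
  simpa only [hf, Matrix.updateRow_eq_self] using cramer.symm

/-- The determinant of `M` with row `i` replaced by `u` and row `j` by `v`: the bracket `D(u, v)`
with the distinguished rows in arbitrary positions. The rows `i` and `j` of `M` itself are
irrelevant when `i ≠ j`; when `i = j` the replacement by `v` wins. -/
def detUpdateRows (M : Matrix n n R) (i j : n) (u v : n → R) : R :=
  ((M.updateRow i u).updateRow j v).det

theorem detUpdateRows_swap (M : Matrix n n R) {i j : n} (hij : i ≠ j) (u v : n → R) :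
    detUpdateRows M i j u v = -detUpdateRows M i j v u := by
  have rows_swap : (M.updateRow i u).updateRow j v =
      ((M.updateRow i v).updateRow j u).submatrix (Equiv.swap i j) id := by
    ext k l
    rcases eq_or_ne k i with rfl | hki
    · simp [hij]
    · rcases eq_or_ne k j with rfl | hkj
      · simp [hij]
      · simp [hki, hkj, Equiv.swap_apply_of_ne_of_ne]
  rw [detUpdateRows, rows_swap, Matrix.det_permute, Equiv.Perm.sign_swap hij]
  simp [detUpdateRows]

theorem detUpdateRows_mul_detUpdateRows (M : Matrix n n R) {i j : n} (hij : i ≠ j)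
    (x y a b : n → R) :
    detUpdateRows M i j x y * detUpdateRows M i j a b =
      detUpdateRows M i j b y * detUpdateRows M i j a x
        + detUpdateRows M i j x b * detUpdateRows M i j a y := by
  let rowsXY := (M.updateRow i x).updateRow j y
  let rowsAB := (M.updateRow i a).updateRow j b
  have common_row (k : n) (hk : k ≠ i ∧ k ≠ j) : (rowsAB.updateRow j (rowsXY k)).det = 0 :=
    Matrix.det_zero_of_row_eq hk.2 (by simp [rowsXY, rowsAB, hk.1, hk.2])
  have rowsXY_i : rowsXY i = x := by simp [rowsXY, hij]
  have rowsXY_j : rowsXY j = y := by simp [rowsXY]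
  have rowsAB_j : rowsAB j = b := by simp [rowsAB]
  calc rowsXY.det * rowsAB.det
      = ∑ k, (rowsXY.updateRow k b).det * (rowsAB.updateRow j (rowsXY k)).det := by
        rw [det_mul_det_eq_sum_det_updateRow_mul rowsXY rowsAB j, rowsAB_j]
    _ = (rowsXY.updateRow i b).det * (rowsAB.updateRow j x).det
          + (rowsXY.updateRow j b).det * (rowsAB.updateRow j y).det := by
        rw [Fintype.sum_eq_add i j hij fun k hk => by rw [common_row k hk, mul_zero],
          rowsXY_i, rowsXY_j]
    _ = detUpdateRows M i j b y * detUpdateRows M i j a x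
          + detUpdateRows M i j x b * detUpdateRows M i j a y := by
        simp only [rowsXY, rowsAB, detUpdateRows, Matrix.updateRow_comm _ hij.symm,
          Matrix.updateRow_idem]

theorem stmt5_general (M : Matrix n n R) {i j : n} (hij : i ≠ j) (x y a b : n → R) :
    detUpdateRows M i j x a * detUpdateRows M i j y b
        - detUpdateRows M i j y a * detUpdateRows M i j x b
      = detUpdateRows M i j x y * detUpdateRows M i j a b := by
  rw [detUpdateRows_mul_detUpdateRows M hij x y a b, detUpdateRows_swap M hij b y,
    detUpdateRows_swap M hij a x, detUpdateRows_swap M hij a y]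
  ring

end DetUpdateRows

theorem plueckerD_eq_detUpdateRows {R : Type*} [CommRing R] {p : ℕ} (hp : 2 ≤ p)
    (w : ℕ → Fin p → R) (u v : Fin p → R) :
    plueckerD w u v = detUpdateRows (Matrix.of fun k : Fin p => w k)
      ⟨p - 2, by omega⟩ ⟨p - 1, by omega⟩ u v := by
  refine congrArg Matrix.det (Matrix.ext fun k l => ?_)
  simp only [Matrix.of_apply, Matrix.updateRow_apply, Fin.ext_iff]
  rcases lt_trichotomy (k : ℕ) (p - 2) with common | penultimate | last
  · rw [if_pos common, if_neg (by omega), if_neg common.ne]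
  · rw [if_neg penultimate.not_lt, if_pos penultimate, if_neg (by omega), if_pos penultimate]
  · rw [if_neg last.not_gt, if_neg last.ne', if_pos (by omega)]

/-- the Plücker relation
`D(x,a)·D(y,b) − D(y,a)·D(x,b) = D(x,y)·D(a,b)` for the determinants `D(u,v)` of the
`p × p` matrices (`p ≥ 2`) whose rows are `w 0, …, w (p-3), u, v` in this order. -/
theorem stmt5 {R : Type*} [CommRing R] {p : ℕ} (hp : 2 ≤ p)
    (w : ℕ → Fin p → R) (x y a b : Fin p → R) :
    plueckerD w x a * plueckerD w y b - plueckerD w y a * plueckerD w x b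
      = plueckerD w x y * plueckerD w a b := by
  simpa only [plueckerD_eq_detUpdateRows hp] using
    stmt5_general _ (by simp only [ne_eq, Fin.mk.injEq]; omega) x y a b
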